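/- Let $n, m \in \mathbb{N}$ with $m + 1 < n$, let $a_J, a_1, \dots, a_m \in \mathbb{R}$, $b_J, b_1, \dots, b_m \in \mathbb{R}^n$ and $c_J, c_1, \dots, c_m \in \mathbb{R}$, and consider the S-QCQP problem: minimize $J(x) = a_J\|x\|^2 + 2 b_J^T x + c_J$ over $x \in \mathbb{R}^n$ subject to $f_k(x) = a_k\|x\|^2 + 2 b_k^T x + c_k \le 0$ for $k = 1, \dots, m$, where $\|\cdot\|$ is the Euclidean norm. Its relaxation SDP2 is: over pairs $(x, y) \in \mathbb{R}^n \times \mathbb{R}^n$, minimize $a_J \sum_{i=1}^n y_i + 2 b_J^T x$ (the additive constant $c_J$ being omitted) subject to $a_k \sum_{i=1}^n y_i + 2 b_k^T x + c_k \le 0$ for $k = 1, \dots, m$ and $x_i^2 \le y_i$ for $i = 1, \dots, n$. Assume there exists $\gamma' \in \mathbb{R}^m$ with $\gamma'_k \ge 0$ for all $k$, $\gamma' \ne 0$, such that $a_J + \sum_{k=1}^m \gamma'_k a_k \ge 0$; let $x^*$ be a global minimizer of the S-QCQP; and assume there exists $x_0 \in \mathbb{R}^n$ with $f_k(x_0)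 < 0$ for all $k = 1, \dots, m$. Then the pair $(x^*, y^*)$ with $y^*_i := (x^*_i)^2$ for $i = 1, \dots, n$ is a global minimizer of SDP2, and the optimal value of SDP2 plus the omitted constant $c_J$ equals $J(x^*)$; i.e. the relaxation SDP2 is exact. -/

import Mathlib

open Matrix

/-- The data of a scalar QCQP in `n` variables with `m` constraints:
minimize `aJ xᵀx + 2 bJᵀx + cJ` subject to `a k xᵀx + 2 (b k)ᵀx + c k ≤ 0` for all `k`. -/
structure SQCQP (n m : ℕ) where
  aJ : ℝ
  bJ : Fin n → ℝ
  cJ : ℝ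
  a : Fin m → ℝ
  b : Fin m → Fin n → ℝ
  c : Fin m → ℝ

namespace SQCQP

/-- The objective `J`; here `x ⬝ᵥ x = xᵀx = ‖x‖²` (Euclidean norm). -/
def J {n m : ℕ} (P : SQCQP n m) (x : Fin n → ℝ) : ℝ :=
  P.aJ * (x ⬝ᵥ x) + 2 * (P.bJ ⬝ᵥ x) + P.cJ

/-- The constraint functions `f_k`. -/
def f {n m : ℕ} (P : SQCQP n m) (k : Fin m) (x : Fin n → ℝ) : ℝ :=
  P.a k * (x ⬝ᵥ x) + 2 * (P.b k ⬝ᵥ x) + P.c k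

/-- The feasible set of the S-QCQP. -/
def feasible {n m : ℕ} (P : SQCQP n m) : Set (Fin n → ℝ) :=
  {x | ∀ k, P.f k x ≤ 0}

/-- `x` is a global minimizer of the S-QCQP. -/
def IsGlobalMin {n m : ℕ} (P : SQCQP n m) (x : Fin n → ℝ) : Prop :=
  x ∈ P.feasible ∧ ∀ z ∈ P.feasible, P.J x ≤ P.J z

/-- The objective of the relaxation SDP2, which omits the additive constant `cJ`. -/
def sdp2Obj {n m : ℕ} (P : SQCQP n m) (p : (Fin n → ℝ) × (Fin n → ℝ)) : ℝ :=
  P.aJ * (∑ i, p.2 i) + 2 * (P.bJ ⬝ᵥ p.1)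

/-- The feasible set of the relaxation SDP2, consisting of pairs `(x, y)`. -/
def sdp2Feasible {n m : ℕ} (P : SQCQP n m) : Set ((Fin n → ℝ) × (Fin n → ℝ)) :=
  {p | (∀ k, P.a k * (∑ i, p.2 i) + 2 * (P.b k ⬝ᵥ p.1) + P.c k ≤ 0) ∧
    ∀ i, p.1 i ^ 2 ≤ p.2 i}

/-- The pair `p = (x, y)` is a global minimizer of SDP2. -/
def IsSDP2GlobalMin {n m : ℕ} (P : SQCQP n m) (p : (Fin n → ℝ) × (Fin n → ℝ)) : Prop :=
  p ∈ P.sdp2Feasible ∧ ∀ q ∈ P.sdp2Feasible, P.sdp2Obj p ≤ P.sdp2Obj q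

end SQCQP

/-- Fewer than `n` vectors in `ℝⁿ` have a common nonzero orthogonal vector. -/
theorem exists_ne_zero_forall_dotProduct_eq_zero {ι : Type*} [Fintype ι] {n : ℕ}
    (hn : Fintype.card ι < n) (b : ι → Fin n → ℝ) :
    ∃ v : Fin n → ℝ, v ≠ 0 ∧ ∀ i, b i ⬝ᵥ v = 0 := by
  have hker : LinearMap.ker (Matrix.of b).mulVecLin ≠ ⊥ :=
    LinearMap.ker_ne_bot_of_finrank_lt (by simpa using hn)
  obtain ⟨v, hv, hv0⟩ := Submodule.exists_mem_ne_zero_of_ne_bot hker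
  exact ⟨v, hv0, fun i => congrFun (LinearMap.mem_ker.1 hv) i⟩

/-- A point of the closed ball of squared radius `s` can be moved along any nonzero direction
to the sphere of squared radius `s`. -/
theorem exists_dotProduct_self_add_smul_eq {n : ℕ} {v : Fin n → ℝ} (hv : v ≠ 0)
    (x : Fin n → ℝ) {s : ℝ} (hs : x ⬝ᵥ x ≤ s) :
    ∃ t : ℝ, (x + t • v) ⬝ᵥ (x + t • v) = s := by
  have hpos : 0 < v ⬝ᵥ v :=
    lt_of_le_of_ne (Finset.sum_nonneg fun i _ => mul_self_nonneg (v i))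
      fun h => hv (dotProduct_self_eq_zero.1 h.symm)
  have hdisc : 0 ≤ discrim (v ⬝ᵥ v) (2 * (x ⬝ᵥ v)) (x ⬝ᵥ x - s) := by
    unfold discrim
    nlinarith [sq_nonneg (2 * (x ⬝ᵥ v)), mul_nonneg hpos.le (sub_nonneg.2 hs)]
  obtain ⟨t, ht⟩ := exists_quadratic_eq_zero hpos.ne' ⟨_, (Real.mul_self_sqrt hdisc).symm⟩
  refine ⟨t, ?_⟩
  simp only [add_dotProduct, dotProduct_add, smul_dotProduct, dotProduct_smul, smul_eq_mul,
    dotProduct_comm v x]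
  linarith

namespace SQCQP

/-- If `m + 1 < n`, every feasible pair of SDP2 is matched by a feasible point of the S-QCQP with
the same objective value. -/
theorem exists_mem_feasible_J_eq {n m : ℕ} (hmn : m + 1 < n) (P : SQCQP n m)
    {p : (Fin n → ℝ) × (Fin n → ℝ)} (hp : p ∈ P.sdp2Feasible) :
    ∃ z ∈ P.feasible, P.J z = P.sdp2Obj p + P.cJ := by
  obtain ⟨v, hv, hbv⟩ := exists_ne_zero_forall_dotProduct_eq_zero
    (ι := Option (Fin m)) (by simpa using hmn) (fun o => o.elim P.bJ P.b)
  have hJ : P.bJ ⬝ᵥ v = 0 := hbv none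
  have hb : ∀ k, P.b k ⬝ᵥ v = 0 := fun k => hbv (some k)
  have hle : p.1 ⬝ᵥ p.1 ≤ ∑ i, p.2 i :=
    Finset.sum_le_sum fun i _ => by simpa [sq] using hp.2 i
  obtain ⟨t, ht⟩ := exists_dotProduct_self_add_smul_eq hv p.1 hle
  refine ⟨p.1 + t • v, fun k => ?_, ?_⟩
  · simpa [f, ht, dotProduct_add, hb k] using hp.1 k
  · simp [J, sdp2Obj, ht, dotProduct_add, hJ]

/-- A feasible point `x` of the S-QCQP lifts to a feasible pair of SDP2. -/
theorem lift_mem_sdp2Feasible {n m : ℕ} (P : SQCQP n m) {x : Fin n → ℝ} (hx : x ∈ P.feasible) :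
    (x, fun i => x i ^ 2) ∈ P.sdp2Feasible :=
  ⟨fun k => by simpa [f, dotProduct, sq] using hx k, fun _ => le_rfl⟩

/-- The lift of `x` has the same objective value, up to the omitted constant. -/
theorem sdp2Obj_lift_add {n m : ℕ} (P : SQCQP n m) (x : Fin n → ℝ) :
    P.sdp2Obj (x, fun i => x i ^ 2) + P.cJ = P.J x := by
  simp [J, sdp2Obj, dotProduct, sq]

end SQCQP

/-- Exactness of SDP2: `(x*, y*)` with `y*_i = (x*_i)²` is a global minimizer of SDP2, and the
optimal value of SDP2, with the omitted constant `cJ` added back, is attained and equals `J x*`. -/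
theorem stmt_8 (n m : ℕ) (hmn : m + 1 < n) (P : SQCQP n m)
    (hγ : ∃ γ' : Fin m → ℝ, (∀ k, 0 ≤ γ' k) ∧ γ' ≠ 0 ∧ 0 ≤ P.aJ + ∑ k, γ' k * P.a k)
    (xstar : Fin n → ℝ) (hx : P.IsGlobalMin xstar)
    (hslater : ∃ x₀ : Fin n → ℝ, ∀ k, P.f k x₀ < 0) :
    P.IsSDP2GlobalMin (xstar, fun i => xstar i ^ 2) ∧
      IsLeast ((fun p => P.sdp2Obj p + P.cJ) '' P.sdp2Feasible) (P.J xstar) := by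
  have hmem := P.lift_mem_sdp2Feasible hx.1
  have hobj := P.sdp2Obj_lift_add xstar
  have hle : ∀ q ∈ P.sdp2Feasible, P.J xstar ≤ P.sdp2Obj q + P.cJ := fun q hq => by
    obtain ⟨z, hz, hzq⟩ := P.exists_mem_feasible_J_eq hmn hq
    exact hzq ▸ hx.2 z hz
  refine ⟨⟨hmem, fun q hq => by linarith [hle q hq]⟩, ⟨_, hmem, hobj⟩, ?_⟩
  rintro _ ⟨q, hq, rfl⟩
  exact hle q hq
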